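/- Let x ∈ [-1,1], X = {x}, and suppose t = arccos(x)/(2π) is irrational. Then there exists no Lebesgue measurable X-avoiding set I ⊆ S^1 with λ(I) = 1/2; equivalently, the supremum 1/2 of the measures of measurable X-avoiding sets is not attained as a maximum. -/

import Mathlib

open MeasureTheory Metric Matrix Filter
open scoped RealInnerProductSpace ENNReal

noncomputable section

/-- `ℝ^n` as a Euclidean space. -/
abbrev Eucl (n : ℕ) : Type := EuclideanSpace ℝ (Fin n)

/-- The unit sphere `S^{n-1}` in `ℝ^n`. -/
abbrev Sph (n : ℕ) := Metric.sphere (0 : Eucl n) 1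

/-- The Lebesgue surface measure on the unit sphere `S^{n-1}`, normalised so that the
total measure of the sphere is `1`. -/
def sphMeasure (n : ℕ) : Measure (Sph n) :=
  (((volume : Measure (Eucl n)).toSphere) Set.univ)⁻¹ • (volume : Measure (Eucl n)).toSphere

/-- A subset `I` of the sphere is `X`-avoiding if `⟪ξ, η⟫ ∉ X` for all `ξ, η ∈ I`. -/
def Avoids {n : ℕ} (X : Set ℝ) (I : Set (Sph n)) : Prop :=
  ∀ ξ ∈ I, ∀ η ∈ I, ⟪(ξ : Eucl n), (η : Eucl n)⟫ ∉ X

/-!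
Let `R` be the rotation by the angle `θ = arccos x`. A set `I` avoids `x` only if `R⁻¹ I` is
disjoint from `I`; when `I` has half of the total mass, this forces `R⁻¹ I = Iᶜ` almost everywhere,
so `I` is almost invariant under `R²`. But `R²` is again an irrational rotation, hence ergodic,
and an almost invariant set is null or conull.
-/

section HalfMeasure

variable {α : Type*} [MeasurableSpace α] {μ : Measure α} [IsFiniteMeasure μ] {T : α → α} {s : Set α}

lemma preimage_ae_eq_compl_of_disjoint (hT : MeasurePreserving T μ μ) (hs : NullMeasurableSet s μ)
    (hdisj : Disjoint (T ⁻¹' s) s) (hhalf : μ s = μ Set.univ / 2) : T ⁻¹' s =ᵐ[μ] (sᶜ : Set α) := by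
  have measure_compl_le : μ sᶜ ≤ μ (T ⁻¹' s) := by
    rw [measure_compl₀ hs (measure_ne_top μ s), hT.measure_preimage hs, hhalf,
      ENNReal.sub_half (measure_ne_top μ _)]
  exact ae_eq_of_subset_of_measure_ge hdisj.subset_compl_right measure_compl_le
    (hs.preimage hT.quasiMeasurePreserving) (measure_ne_top μ _)

lemma measure_ne_half_of_disjoint_preimage [NeZero μ] (hT : MeasurePreserving T μ μ)
    (hT₂ : Ergodic T^[2] μ) (hs : NullMeasurableSet s μ) (hdisj : Disjoint (T ⁻¹' s) s) :
    μ s ≠ μ Set.univ / 2 := by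
  intro hhalf
  have flip : T ⁻¹' s =ᵐ[μ] (sᶜ : Set α) := preimage_ae_eq_compl_of_disjoint hT hs hdisj hhalf
  have invariant : T^[2] ⁻¹' s =ᵐ[μ] s :=
    (hT.quasiMeasurePreserving.preimage_ae_eq flip).trans <| by
      simpa only [Set.preimage_compl, compl_compl] using flip.compl
  have half_ne_univ : μ Set.univ / 2 ≠ μ Set.univ :=
    (ENNReal.half_lt_self (NeZero.ne _) (measure_ne_top μ _)).ne
  rcases hT₂.quasiErgodic.ae_empty_or_univ₀ hs invariant with h | h
  · simpa [hhalf, NeZero.ne μ] using measure_congr h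
  · exact half_ne_univ (hhalf.symm.trans (measure_congr h))

end HalfMeasure

section UnitSphere

variable {E F : Type*} [NormedAddCommGroup E] [NormedSpace ℝ E]
  [NormedAddCommGroup F] [NormedSpace ℝ F]

/-- The homeomorphism between unit spheres induced by a linear isometry, used to pass
from measure-preserving isometries to measure-preserving maps of the sphere. -/
def unitSphereHomeomorph (L : E ≃ₗᵢ[ℝ] F) : sphere (0 : E) 1 ≃ₜ sphere (0 : F) 1 :=
  L.toHomeomorph.subtype fun v => by simp

@[simp]
lemma coe_unitSphereHomeomorph (L : E ≃ₗᵢ[ℝ] F) (v : sphere (0 : E) 1) :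
    (unitSphereHomeomorph L v : F) = L v := rfl

open scoped Pointwise in
lemma smul_image_coe_preimage_unitSphereHomeomorph (L : E ≃ₗᵢ[ℝ] F) (R : Set ℝ)
    (s : Set (sphere (0 : F) 1)) :
    R • ((↑) '' (unitSphereHomeomorph L ⁻¹' s) : Set E) = L ⁻¹' (R • ((↑) '' s : Set F)) := by
  have image_coe : L '' ((↑) '' (unitSphereHomeomorph L ⁻¹' s)) = ((↑) '' s : Set F) := by
    conv_rhs => rw [← Set.image_preimage_eq s (unitSphereHomeomorph L).surjective]
    simp only [Set.image_image, coe_unitSphereHomeomorph]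
  have image_smul : L '' (R • ((↑) '' (unitSphereHomeomorph L ⁻¹' s) : Set E)) =
      R • (L '' ((↑) '' (unitSphereHomeomorph L ⁻¹' s))) :=
    Set.image_image2_distrib_right fun r v => map_smul L r v
  rw [← image_coe, ← image_smul, Set.preimage_image_eq _ L.injective]

variable [MeasurableSpace E] [BorelSpace E] [MeasurableSpace F] [BorelSpace F]
  {μ : Measure E} {ν : Measure F}

lemma measurePreserving_unitSphereHomeomorph {L : E ≃ₗᵢ[ℝ] F} (hL : MeasurePreserving L μ ν) :
    MeasurePreserving (unitSphereHomeomorph L) μ.toSphere ν.toSphere where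
  measurable := (unitSphereHomeomorph L).measurable
  map_eq := by
    ext s hs
    rw [Measure.map_apply (unitSphereHomeomorph L).measurable hs, ν.toSphere_apply' hs,
      μ.toSphere_apply' ((unitSphereHomeomorph L).measurable hs),
      smul_image_coe_preimage_unitSphereHomeomorph, L.toLinearEquiv.finrank_eq]
    congr 1
    exact MeasurePreserving.measure_preimage_equiv (f := L.toHomeomorph.toMeasurableEquiv) hL _

end UnitSphere

section Rotation

lemma denseRange_zsmul_angle {a : ℝ} (ha : Irrational (a / (2 * Real.pi))) :
    DenseRange (· • (a : Real.Angle) : ℤ → Real.Angle) :=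
  AddCircle.denseRange_zsmul_coe_iff.2 ha

variable {V : Type*} [NormedAddCommGroup V] [InnerProductSpace ℝ V]
  [Fact (Module.finrank ℝ V = 2)] (o : Orientation ℝ V (Fin 2))

/-- The rotation of the unit circle of an oriented Euclidean plane by the angle `θ`, the dynamical
system whose ergodicity is exploited. -/
def circleRotation (θ : Real.Angle) : sphere (0 : V) 1 ≃ₜ sphere (0 : V) 1 :=
  unitSphereHomeomorph (o.rotation θ)

lemma coe_circleRotation (θ : Real.Angle) (v : sphere (0 : V) 1) :
    (circleRotation o θ v : V) = o.rotation θ v := rfl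

lemma circleRotation_iterate_two (θ : Real.Angle) :
    (circleRotation o θ)^[2] = circleRotation o (θ + θ) := by
  ext v
  simp [coe_circleRotation]

lemma inner_circleRotation (θ : Real.Angle) (v : sphere (0 : V) 1) :
    ⟪(v : V), circleRotation o θ v⟫ = θ.cos := by
  simp [coe_circleRotation, Orientation.rotation_apply, inner_add_right, inner_smul_right]

lemma continuous_rotation_apply (v : V) : Continuous fun θ : Real.Angle => o.rotation θ v := by
  simp only [Orientation.rotation_apply]
  exact (Real.Angle.continuous_cos.smul continuous_const).add
    (Real.Angle.continuous_sin.smul continuous_const)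

lemma continuous_oangle_coe_sphere (v : sphere (0 : V) 1) :
    Continuous fun w : sphere (0 : V) 1 => o.oangle v w :=
  continuous_iff_continuousAt.2 fun w =>
    (o.continuousAt_oangle (ne_zero_of_mem_unit_sphere v) (ne_zero_of_mem_unit_sphere w)).comp
      (f := fun w : sphere (0 : V) 1 => ((v : V), (w : V))) (by fun_prop)

/-- The angular coordinate on the unit circle of an oriented Euclidean plane, measured from `v`.
It conjugates rotations to translations of `Real.Angle`. -/
def oangleHomeomorph (v : sphere (0 : V) 1) : sphere (0 : V) 1 ≃ₜ Real.Angle where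
  toFun w := o.oangle v w
  invFun θ := circleRotation o θ v
  left_inv w := Subtype.ext ((o.rotation_oangle_eq_iff_norm_eq _ _).2 (by simp))
  right_inv θ := o.oangle_rotation_self_right (ne_zero_of_mem_unit_sphere v) θ
  continuous_toFun := continuous_oangle_coe_sphere o v
  continuous_invFun := (continuous_rotation_apply o v).subtype_mk _

lemma oangleHomeomorph_circleRotation (θ : Real.Angle) (v w : sphere (0 : V) 1) :
    oangleHomeomorph o v (circleRotation o θ w) = θ + oangleHomeomorph o v w :=
  (o.oangle_rotation_right (ne_zero_of_mem_unit_sphere v) (ne_zero_of_mem_unit_sphere w) θ).trans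
    (add_comm _ _)

lemma ergodic_circleRotation [MeasurableSpace V] [BorelSpace V] {μ : Measure (sphere (0 : V) 1)}
    [IsFiniteMeasure μ] (hμ : ∀ θ, MeasurePreserving (circleRotation o θ) μ μ) {a : ℝ}
    (ha : Irrational (a / (2 * Real.pi))) : Ergodic (circleRotation o a) μ := by
  have : Nontrivial V := Module.nontrivial_of_finrank_eq_succ (R := ℝ) (n := 1) Fact.out
  have : FiniteDimensional ℝ V := .of_fact_finrank_eq_two
  obtain ⟨v⟩ : Nonempty (sphere (0 : V) 1) := (NormedSpace.sphere_nonempty.2 zero_le_one).to_subtype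
  let angle := oangleHomeomorph o v
  have : CompactSpace Real.Angle := angle.compactSpace
  borelize Real.Angle
  let ν := μ.map angle
  have angle_preserving : MeasurePreserving angle.toMeasurableEquiv μ ν :=
    angle.measurable.measurePreserving μ
  have : ν.IsAddLeftInvariant := ⟨fun θ => (angle_preserving.of_semiconj (hμ θ)
    (oangleHomeomorph_circleRotation o θ v) (measurable_const_add θ)).map_eq⟩
  have translation_ergodic : Ergodic ((a : Real.Angle) + ·) ν :=
    ergodic_add_left_of_denseRange_zsmul (denseRange_zsmul_angle ha) ν
  refine (angle_preserving.symm _).ergodic_of_ergodic_semiconj translation_ergodic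
    (circleRotation o a).measurable fun θ => angle.injective ?_
  simp [angle, oangleHomeomorph_circleRotation]

theorem circle_sup_irrational_not_attained_general [MeasurableSpace V] [BorelSpace V]
    {μ : Measure (sphere (0 : V) 1)} [IsFiniteMeasure μ] [NeZero μ]
    (hμ : ∀ θ, MeasurePreserving (circleRotation o θ) μ μ) {a : ℝ}
    (ha : Irrational (a / (2 * Real.pi))) {I : Set (sphere (0 : V) 1)} (hI : NullMeasurableSet I μ)
    (havoid : ∀ ξ ∈ I, ∀ η ∈ I, ⟪(ξ : V), (η : V)⟫ ≠ Real.cos a) : μ I ≠ μ Set.univ / 2 := by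
  have double_ergodic : Ergodic (circleRotation o a)^[2] μ := by
    have ha₂ : Irrational ((a + a) / (2 * Real.pi)) := by
      rw [← two_mul, mul_div_assoc]
      exact_mod_cast ha.natCast_mul two_ne_zero
    rw [circleRotation_iterate_two]
    exact ergodic_circleRotation o hμ ha₂
  have rotated_disjoint : Disjoint (circleRotation o a ⁻¹' I) I :=
    Set.disjoint_left.2 fun v hrot hv => havoid v hv _ hrot (by simp [inner_circleRotation])
  exact measure_ne_half_of_disjoint_preimage (hμ a) double_ergodic hI rotated_disjoint

end Rotation

section SphMeasure

variable {n : ℕ}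

instance isProbabilityMeasure_sphMeasure [NeZero n] : IsProbabilityMeasure (sphMeasure n) :=
  have : NeZero (volume : Measure (Eucl n)).toSphere := ⟨Measure.toSphere_ne_zero _⟩
  isProbabilityMeasureSMul

lemma measurePreserving_sphMeasure (L : Eucl n ≃ₗᵢ[ℝ] Eucl n) :
    MeasurePreserving (unitSphereHomeomorph L) (sphMeasure n) (sphMeasure n) :=
  (measurePreserving_unitSphereHomeomorph L.measurePreserving).smul_measure _

end SphMeasure

/-- If `x ∈ [-1,1]` and `t = arccos x / (2π)` is irrational, then there is no measurable
`{x}`-avoiding subset of the unit circle `S^1` of normalised measure exactly `1/2`; that is,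
the supremum `1/2` is not attained as a maximum. -/
theorem circle_sup_irrational_not_attained (x : ℝ) (hx : x ∈ Set.Icc (-1 : ℝ) 1)
    (hirr : Irrational (Real.arccos x / (2 * Real.pi))) :
    ¬ ∃ I : Set (Sph 2), MeasurableSet I ∧ Avoids {x} I ∧ sphMeasure 2 I = 1 / 2 := by
  rintro ⟨I, hI, hav, hhalf⟩
  have : Fact (Module.finrank ℝ (Eucl 2) = 2) := ⟨finrank_euclideanSpace_fin⟩
  let o := (EuclideanSpace.basisFun (Fin 2) ℝ).toBasis.orientation
  refine circle_sup_irrational_not_attained_general o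
    (fun θ => measurePreserving_sphMeasure (o.rotation θ)) hirr hI.nullMeasurableSet
    (fun ξ hξ η hη hinner => hav ξ hξ η hη (hinner.trans (Real.cos_arccos hx.1 hx.2))) ?_
  rw [hhalf, measure_univ]
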